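/- Let L be an even positive-definite lattice of rank n₀ ≥ 1, let β₀ be an integer, and let φ be a weakly holomorphic Jacobi form of weight 0 and index L having 2-reflective singular support with multiplicity β₀. Then f(0,0) = 2k, where k = β₀·[12 + |R(L)|·(12/n₀ − 1/2)] + (3/n₀ − 1/2)·Σ_{s ∈ L^∨, (s,s) = 1/2, 2s ∈ L} f(0,s). -/

import Mathlib

/-!
Write `A(τ) = φ(τ, 0)` and, for `v ∈ L ⊗ ℚ`, `B_v(τ) = Σ f(m,l) (l,v)² q^m`, which up to the factor
`(2πi)²` is the second derivative of `w ↦ φ(τ, wv)` at `w = 0`. Differentiating the transformation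
law of `φ` under `τ ↦ -1/τ` twice gives `B_v(-1/τ) = τ² B_v(τ) + (v,v) τ A(τ) / (2πi)`, and the
anomalous term is cancelled by that of `E₂`: the function `12 B_v - (v,v) E₂ A` is a weakly
holomorphic modular form of weight 2. Its constant term vanishes (`const_term_eq_zero`).

Positivity of `L` and the hypothesis on singular coefficients leave, for `m < 0`, only
`f(-1,0) = β₀`, and for `m = 0` the origin, the roots and the vectors `s` of norm `1/2`. Together
with `E₂ = 1 - 24 q + ⋯` the vanishing reads
`12 Σ f(0,l) (l,v)² = (v,v) (Σ f(0,l) - 24 β₀)` for every `v` (`second_moment`). Polarizing and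
summing over a pair of dual bases gives `12 Σ f(0,l) (l,l) = n₀ (Σ f(0,l) - 24 β₀)`
(`trace_identity`), which is solved for `f(0,0)`.
-/

noncomputable section

open Matrix Complex

/-- The complex upper half-plane, as a subset of `ℂ`. -/
def UH : Set ℂ := {τ : ℂ | 0 < τ.im}

/-- An even positive-definite lattice of rank `n`, presented through its Gram matrix:
the underlying free `ℤ`-module is `Fin n → ℤ`, the bilinear form is
`(x, y) = x ⬝ᵥ (G *ᵥ y)`. -/
structure EvenLattice (n : ℕ) where
  /-- the Gram matrix -/
  G : Matrix (Fin n) (Fin n) ℤ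
  symm : G.IsSymm
  even_diag : ∀ i, 2 ∣ G i i
  posdef : ∀ x : Fin n → ℤ, x ≠ 0 → 0 < x ⬝ᵥ (G *ᵥ x)

namespace EvenLattice

variable {n : ℕ}

/-- The bilinear form, extended `ℚ`-bilinearly to `L ⊗ ℚ = Fin n → ℚ`. -/
def bq (L : EvenLattice n) (x y : Fin n → ℚ) : ℚ :=
  x ⬝ᵥ ((L.G.map (Int.cast : ℤ → ℚ)) *ᵥ y)

/-- The bilinear form, extended `ℂ`-bilinearly to `L ⊗ ℂ = Fin n → ℂ`. -/
def bc (L : EvenLattice n) (x y : Fin n → ℂ) : ℂ :=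
  x ⬝ᵥ ((L.G.map (Int.cast : ℤ → ℂ)) *ᵥ y)

/-- `x ∈ L ⊗ ℚ` is a lattice vector, i.e. has integral coordinates. -/
def IsIntVec (L : EvenLattice n) (x : Fin n → ℚ) : Prop := ∀ i, ∃ m : ℤ, x i = m

/-- `x` lies in the dual lattice `L^∨`. -/
def InDual (L : EvenLattice n) (x : Fin n → ℚ) : Prop :=
  ∀ l : Fin n → ℚ, L.IsIntVec l → ∃ m : ℤ, L.bq x l = m

/-- `L` is unimodular, i.e. `L^∨ = L`. -/
def Unimodular (L : EvenLattice n) : Prop :=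
  ∀ x : Fin n → ℚ, L.InDual x → L.IsIntVec x

/-- The number `|R(L)|` of `2`-roots of `L`, i.e. of vectors `r ∈ L` with `(r,r) = 2`. -/
def rootCount (L : EvenLattice n) : ℕ :=
  Nat.card {r : Fin n → ℚ // L.IsIntVec r ∧ L.bq r r = 2}

end EvenLattice

/-- A weakly holomorphic Jacobi form of weight `k` and index `L`, recorded together with the
system of its Fourier coefficients `coef`. -/
structure WeakJacobiForm {n : ℕ} (L : EvenLattice n) (k : ℤ) where
  /-- the underlying function on `ℍ × (L ⊗ ℂ)` -/
  toFun : ℂ → (Fin n → ℂ) → ℂ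
  /-- the Fourier coefficients `f(n, l)` -/
  coef : ℤ → (Fin n → ℚ) → ℂ
  holo : DifferentiableOn ℂ (fun p : ℂ × (Fin n → ℂ) => toFun p.1 p.2)
    (UH ×ˢ (Set.univ : Set (Fin n → ℂ)))
  modular : ∀ a b c d : ℤ, a * d - b * c = 1 → ∀ τ ∈ UH, ∀ z : Fin n → ℂ,
    toFun (((a : ℂ) * τ + b) / ((c : ℂ) * τ + d)) (fun i => z i / ((c : ℂ) * τ + d)) =
      ((c : ℂ) * τ + d) ^ k *
        Complex.exp ((Real.pi : ℂ) * Complex.I * c * L.bc z z / ((c : ℂ) * τ + d)) * toFun τ z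
  elliptic : ∀ x y : Fin n → ℚ, L.IsIntVec x → L.IsIntVec y → ∀ τ ∈ UH, ∀ z : Fin n → ℂ,
    toFun τ (fun i => z i + (x i : ℂ) * τ + (y i : ℂ)) =
      Complex.exp (-((Real.pi : ℂ) * Complex.I) *
        ((L.bq x x : ℂ) * τ + 2 * L.bc (fun i => (x i : ℂ)) z)) * toFun τ z
  coef_bdd : ∃ n₁ : ℤ, ∀ m : ℤ, ∀ l : Fin n → ℚ, m < n₁ → coef m l = 0
  coef_dual : ∀ (m : ℤ) (l : Fin n → ℚ), coef m l ≠ 0 → L.InDual l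
  coef_finite : ∀ m : ℤ, {l : Fin n → ℚ | coef m l ≠ 0}.Finite
  expansion : ∀ τ ∈ UH, ∀ z : Fin n → ℂ,
    HasSum (fun p : ℤ × (Fin n → ℚ) =>
      coef p.1 p.2 * Complex.exp (2 * (Real.pi : ℂ) * Complex.I *
        ((p.1 : ℂ) * τ + L.bc (fun i => (p.2 i : ℂ)) z))) (toFun τ z)

/-- `φ` (a weakly holomorphic Jacobi form of weight `0` and index `L`) has 2-reflective
singular support with multiplicity `β₀`: its Fourier coefficients satisfy `f(n,l) = 0` whenever
`2n − (l,l) < 0`, except that `f(n,l) = β₀` whenever `2n − (l,l) = −2` and `l ∈ L`, while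
`f(n,l)` may be an arbitrary integer whenever `2n − (l,l) = −1/2` and `2l ∈ L`. -/
def TwoReflective {n : ℕ} {L : EvenLattice n} (φ : WeakJacobiForm L 0) (β₀ : ℤ) : Prop :=
  (∀ (m : ℤ) (l : Fin n → ℚ), 2 * (m : ℚ) - L.bq l l = -2 → L.IsIntVec l →
      φ.coef m l = β₀) ∧
  (∀ (m : ℤ) (l : Fin n → ℚ), 2 * (m : ℚ) - L.bq l l = -(1 / 2) →
      L.IsIntVec (fun i => 2 * l i) → ∃ t : ℤ, φ.coef m l = t) ∧
  (∀ (m : ℤ) (l : Fin n → ℚ), 2 * (m : ℚ) - L.bq l l < 0 →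
      ¬(2 * (m : ℚ) - L.bq l l = -2 ∧ L.IsIntVec l) →
      ¬(2 * (m : ℚ) - L.bq l l = -(1 / 2) ∧ L.IsIntVec (fun i => 2 * l i)) →
      φ.coef m l = 0)

/-! ### Weight 2 forms and `q`-series -/

/-- The filter `Im τ → ∞` on `ℂ`. -/
def imInfty : Filter ℂ := Filter.comap Complex.im Filter.atTop

lemma uh_isOpen : IsOpen UH := isOpen_lt continuous_const Complex.continuous_im

lemma uh_convex : Convex ℝ UH := convex_halfSpace_im_gt 0

lemma imInfty_eventually (y : ℝ) : ∀ᶠ τ in imInfty, y < τ.im :=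
  Filter.tendsto_comap.eventually (Filter.eventually_gt_atTop y)

lemma uh_const {f : ℂ → ℂ} (hf : ∀ τ ∈ UH, HasDerivAt f 0 τ) {x y : ℂ}
    (hx : x ∈ UH) (hy : y ∈ UH) : f x = f y := by
  have := uh_convex.norm_image_sub_le_of_norm_hasDerivWithin_le (f := f) (f' := fun _ => 0)
    (C := 0) (fun x hx => (hf x hx).hasDerivWithinAt) (fun x hx => by simp) hx hy
  simp at this
  exact (sub_eq_zero.mp this).symm

lemma uh_neg_inv {τ : ℂ} (h : τ ∈ UH) : -1 / τ ∈ UH := by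
  simp only [UH, Set.mem_ofPred_eq] at *
  have h0 : τ ≠ 0 := by rintro rfl; simp at h
  rw [neg_div, one_div, Complex.neg_im, Complex.inv_im]
  have := Complex.normSq_pos.mpr h0
  rw [neg_div, neg_neg]; positivity

lemma uh_ne_zero {τ : ℂ} (h : τ ∈ UH) : τ ≠ 0 := by
  rintro rfl; simp [UH] at h

/-- A weight 2 weakly holomorphic modular form has vanishing constant term. A primitive `P` on `UH`
is invariant under `τ ↦ -1/τ` (test at `i`), hence under `τ ↦ τ + 1` (test at `e^{2πi/3}`),
whereas `P (τ + 1) - P τ` is the constant term. -/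
lemma const_term_eq_zero {F : ℂ → ℂ} (hF : DifferentiableOn ℂ F UH)
    (hT : ∀ τ ∈ UH, F (τ + 1) = F τ) (hS : ∀ τ ∈ UH, F (-1 / τ) = τ ^ 2 * F τ) {C c : ℂ}
    (hlim : Filter.Tendsto (fun τ => F τ - C * exp (-(2 * Real.pi * I * τ))) imInfty (nhds c)) :
    c = 0 := by
  obtain ⟨P, hP'⟩ := uh_convex.exists_forall_hasDerivWithinAt hF
  have hP : ∀ τ ∈ UH, HasDerivAt P (F τ) τ := fun τ h =>
    (hP' τ h).hasDerivAt (uh_isOpen.mem_nhds h)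
  have hadd : ∀ τ ∈ UH, τ + 1 ∈ UH := fun τ h => by simpa [UH] using h
  have hI : I ∈ UH := by simp [UH]
  -- the period of `P` under `τ ↦ -1/τ` vanishes since `i` is fixed
  have hinv : ∀ τ ∈ UH, P (-1 / τ) = P τ := by
    intro τ hτ
    have := uh_const (f := fun τ => P (-1 / τ) - P τ) (fun τ hτ => by
      have h0 := uh_ne_zero hτ
      have h1 : HasDerivAt (fun τ : ℂ => -1 / τ) (1 / τ ^ 2) τ := by
        have := (hasDerivAt_inv h0).const_mul (-1 : ℂ)
        simpa [div_eq_mul_inv] using this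
      have h2 := ((hP _ (uh_neg_inv hτ)).comp τ h1).sub (hP τ hτ)
      rw [hS τ hτ] at h2
      refine h2.congr_deriv ?_
      rw [mul_right_comm, mul_one_div_cancel (pow_ne_zero 2 h0), one_mul, sub_self]) hτ hI
    have hII : -1 / I = I := by rw [div_eq_iff I_ne_zero, I_mul_I]
    simp only [hII, sub_self] at this
    exact sub_eq_zero.mp this
  have hper : ∀ τ ∈ UH, P (τ + 1) = P τ := by
    -- the point `ρ = e^{2πi/3}` satisfies `-1/ρ = ρ + 1`
    obtain ⟨ρ, hρ, hρe⟩ : ∃ ρ ∈ UH, -1 / ρ = ρ + 1 := by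
      refine ⟨-1 / 2 + (Real.sqrt 3 / 2 : ℝ) * I, ?_, ?_⟩
      · simp [UH]
      · have h3 : ((Real.sqrt 3 : ℝ) : ℂ) ^ 2 = 3 := by
          rw [← ofReal_pow, Real.sq_sqrt (by norm_num)]; norm_num
        rw [div_eq_iff]
        · push_cast
          linear_combination (-I ^ 2 / 4) * h3 - 3 / 4 * I_sq
        · apply uh_ne_zero; simp [UH]
    intro τ hτ
    have := uh_const (f := fun τ => P (τ + 1) - P τ) (fun τ hτ => by
      have h2 := ((hP _ (hadd τ hτ)).comp_add_const τ 1).sub (hP τ hτ)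
      rw [hT τ hτ, sub_self] at h2
      exact h2) hτ hρ
    rw [← hρe, hinv ρ hρ, sub_self] at this
    exact sub_eq_zero.mp this
  have hpi : (2 * Real.pi * I : ℂ) ≠ 0 := by simp [Real.pi_ne_zero]
  -- subtracting a primitive of the principal part leaves a function with derivative tending to `0`
  set Q : ℂ → ℂ := fun τ => P τ + C * exp (-(2 * Real.pi * I * τ)) / (2 * Real.pi * I) - c * τ
  have hQ : ∀ τ ∈ UH, HasDerivAt Q (F τ - C * exp (-(2 * Real.pi * I * τ)) - c) τ := by
    intro τ hτ
    have h1 : HasDerivAt (fun τ : ℂ => exp (-(2 * Real.pi * I * τ)))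
        (exp (-(2 * Real.pi * I * τ)) * (-(2 * Real.pi * I))) τ := by
      have := (((hasDerivAt_id τ).const_mul (2 * Real.pi * I)).neg).cexp
      simpa using this
    have := ((hP τ hτ).add ((h1.const_mul C).div_const (2 * Real.pi * I))).sub
      ((hasDerivAt_id τ).const_mul c)
    refine this.congr_deriv ?_
    rw [mul_neg, mul_neg, neg_div, ← mul_assoc, mul_div_cancel_right₀ _ hpi]
    ring
  have hQ1 : ∀ τ ∈ UH, Q (τ + 1) - Q τ = -c := by
    intro τ hτ
    have he : exp (-(2 * Real.pi * I * (τ + 1))) = exp (-(2 * Real.pi * I * τ)) := by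
      rw [show -(2 * Real.pi * I * (τ + 1)) = -(2 * Real.pi * I * τ) - 2 * Real.pi * I by ring,
        Complex.exp_periodic.sub_eq]
    simp only [Q, he, hper τ hτ]; ring
  by_contra hc
  have hc' : 0 < ‖c‖ := norm_pos_iff.mpr hc
  have hev : ∀ᶠ τ in imInfty, ‖F τ - C * exp (-(2 * Real.pi * I * τ)) - c‖ < ‖c‖ / 2 := by
    have := (tendsto_iff_norm_sub_tendsto_zero.mp hlim).eventually_lt_const
      (half_pos hc')
    exact this
  obtain ⟨s, hs, hsub⟩ := Filter.mem_comap.mp hev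
  obtain ⟨y, hy⟩ := Filter.mem_atTop_sets.mp hs
  set y' := max y 1
  have hb : ∀ τ ∈ {τ : ℂ | y' ≤ τ.im},
      ‖F τ - C * exp (-(2 * Real.pi * I * τ)) - c‖ ≤ ‖c‖ / 2 := fun τ hτ =>
    le_of_lt (hsub (hy _ (le_trans (le_max_left _ _) hτ)))
  have hU : ∀ τ ∈ {τ : ℂ | y' ≤ τ.im}, τ ∈ UH := fun τ hτ => by
    have : (1 : ℝ) ≤ τ.im := le_trans (le_max_right _ _) hτ
    simp only [UH, Set.mem_ofPred_eq]; linarith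
  have hm : (y' : ℂ) * I ∈ {τ : ℂ | y' ≤ τ.im} := by simp
  have := (convex_halfSpace_im_ge y').norm_image_sub_le_of_norm_hasDerivWithin_le (f := Q)
    (fun x hx => (hQ x (hU x hx)).hasDerivWithinAt) hb hm
    (y := (y' : ℂ) * I + 1) (by simp)
  rw [hQ1 _ (hU _ hm)] at this
  simp at this
  linarith

/-- A `q`-series converging on all of `UH` is holomorphic there: on a strip `y₀ < Im τ < y₁` each
term is dominated by the sum of its norms at heights `y₀` and `y₁`. -/
lemma differentiableOn_of_hasSum {ι : Type*} {c : ι → ℂ} {d : ι → ℤ} {A : ℂ → ℂ}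
    (h : ∀ τ ∈ UH, HasSum (fun p => c p * exp (2 * Real.pi * I * (d p * τ))) (A τ)) :
    DifferentiableOn ℂ A UH := by
  have key : ∀ y₀ y₁ : ℝ, 0 < y₀ → 0 < y₁ →
      DifferentiableOn ℂ A {τ : ℂ | y₀ < τ.im ∧ τ.im < y₁} := by
    intro y₀ y₁ h0 h1
    have hs : ∀ y : ℝ, 0 < y → Summable fun p => ‖c p * exp (2 * Real.pi * I * (d p * (y * I)))‖ :=
      fun y hy => (h (y * I) (by simpa [UH] using hy)).summable.norm
    have hopen : IsOpen {τ : ℂ | y₀ < τ.im ∧ τ.im < y₁} :=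
      (isOpen_lt continuous_const Complex.continuous_im).inter
        (isOpen_lt Complex.continuous_im continuous_const)
    refine (Complex.differentiableOn_tsum_of_summable_norm ((hs y₀ h0).add (hs y₁ h1))
      (F := fun p τ => c p * exp (2 * Real.pi * I * (d p * τ)))
      (fun p => by fun_prop) hopen ?_).congr
      (fun τ hτ => (h τ (lt_trans h0 hτ.1)).tsum_eq.symm)
    intro p τ hτ
    simp only [norm_mul, Complex.norm_exp, ← mul_add]
    gcongr
    simp only [mul_re, mul_im, re_ofNat, im_ofNat, ofReal_re, ofReal_im, I_re, I_im, intCast_re,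
      intCast_im]
    ring_nf
    rcases le_total 0 (d p : ℝ) with hd | hd
    · have : Real.exp (-(Real.pi * (d p : ℝ) * τ.im * 2)) ≤
        Real.exp (-(Real.pi * (d p : ℝ) * y₀ * 2)) := by
        have := hτ.1.le
        gcongr
      linarith [Real.exp_pos (-(Real.pi * (d p : ℝ) * y₁ * 2))]
    · have : Real.exp (-(Real.pi * (d p : ℝ) * τ.im * 2)) ≤
        Real.exp (-(Real.pi * (d p : ℝ) * y₁ * 2)) := by
        have h2 := mul_le_mul_of_nonpos_left hτ.2.le (mul_nonpos_of_nonneg_of_nonpos Real.pi_pos.le hd)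
        rw [Real.exp_le_exp]; linarith
      linarith [Real.exp_pos (-(Real.pi * (d p : ℝ) * y₀ * 2))]
  intro τ hτ
  have hτ' : 0 < τ.im := hτ
  refine ((key (τ.im / 2) (τ.im + 1) (by positivity) (by positivity)).differentiableAt
    (IsOpen.mem_nhds ?_ ?_)).differentiableWithinAt
  · exact (isOpen_lt continuous_const Complex.continuous_im).inter
        (isOpen_lt Complex.continuous_im continuous_const)
  · constructor <;> linarith

/-- A `q`-series minus finitely many terms, among them all those of nonpositive exponent, tends
to `0` as `Im τ → ∞`. -/
lemma tendsto_of_hasSum {ι : Type*} {c : ι → ℂ} {d : ι → ℤ} {A : ℂ → ℂ}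
    (h : ∀ τ ∈ UH, HasSum (fun p => c p * exp (2 * Real.pi * I * (d p * τ))) (A τ))
    (s : Finset ι) (hs : ∀ p ∉ s, c p ≠ 0 → 1 ≤ d p) :
    Filter.Tendsto (fun τ => A τ - ∑ p ∈ s, c p * exp (2 * Real.pi * I * (d p * τ)))
      imInfty (nhds 0) := by
  classical
  have hsum : Summable fun p => ‖c p * exp (2 * Real.pi * I * (d p * I))‖ :=
    (h I (by simp [UH])).summable.norm
  set K := ∑' p, ‖c p * exp (2 * Real.pi * I * (d p * I))‖
  have hbound : ∀ᶠ τ in imInfty,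
      ‖A τ - ∑ p ∈ s, c p * exp (2 * Real.pi * I * (d p * τ))‖ ≤
        K * Real.exp (-(2 * Real.pi * (τ.im - 1))) := by
    filter_upwards [imInfty_eventually 1] with τ hτ
    have h1 := h τ (lt_trans one_pos hτ)
    have h2 := h1.sub (hasSum_sum_of_ne_finset_zero (s := s)
      (f := fun p => if p ∈ s then c p * exp (2 * Real.pi * I * (d p * τ)) else 0)
      (fun p hp => by simp [hp]))
    rw [Finset.sum_congr rfl (fun p hp => if_pos hp)] at h2
    refine h2.norm_le_of_bounded (hsum.hasSum.mul_right _) ?_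
    intro p
    by_cases hp : p ∈ s
    · simp only [hp, if_true, sub_self, norm_zero]; positivity
    by_cases hc : c p = 0
    · simp [hc]
    have hd : (1 : ℝ) ≤ d p := by exact_mod_cast hs p hp hc
    simp only [hp, if_false, sub_zero, norm_mul, Complex.norm_exp]
    rw [mul_assoc ‖c p‖, ← Real.exp_add]
    gcongr
    simp only [mul_re, mul_im, re_ofNat, im_ofNat, ofReal_re, ofReal_im, I_re, I_im, intCast_re,
      intCast_im]
    ring_nf
    nlinarith [mul_nonneg Real.pi_pos.le
      (mul_nonneg (sub_nonneg.mpr hd) (sub_nonneg.mpr hτ.le))]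
  refine squeeze_zero_norm' hbound ?_
  have : Filter.Tendsto (fun y : ℝ => K * Real.exp (-(2 * Real.pi * (y - 1)))) Filter.atTop
      (nhds (K * 0)) := by
    refine (Real.tendsto_exp_neg_atTop_nhds_zero.comp ?_).const_mul K
    exact (Filter.tendsto_atTop_add_const_right _ (-1) Filter.tendsto_id).const_mul_atTop
      Real.two_pi_pos
  rw [mul_zero] at this
  exact this.comp Filter.tendsto_comap

lemma hasSum_of_eq {ι : Type*} {f g : ι → ℂ} {a : ℂ} (h : HasSum f a) (e : ∀ p, g p = f p) :
    HasSum g a := by rwa [funext e]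

/-! ### The Eisenstein series `E₂` -/

/-- The Eisenstein series `E₂` as a function on `ℂ` (meaningful on `UH`). -/
def e2 (τ : ℂ) : ℂ := EisensteinSeries.E2 (UpperHalfPlane.ofComplex τ)

lemma e2_hasSum {τ : ℂ} (hτ : τ ∈ UH) :
    HasSum (fun m : ℕ => (if m = 0 then 1 else -24 * ArithmeticFunction.sigma 1 m : ℂ) *
      exp (2 * Real.pi * I * (((m : ℤ) : ℂ) * τ))) (e2 τ) := by
  have := EisensteinSeries.hasSum_qExpansion_E2 (z := ⟨τ, hτ⟩)
  have e : UpperHalfPlane.ofComplex τ = ⟨τ, hτ⟩ := UpperHalfPlane.ofComplex_apply_of_im_pos hτ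
  rw [e2, e]
  refine hasSum_of_eq this fun m => ?_
  rw [smul_eq_mul, ← Complex.exp_nat_mul]
  congr 2
  push_cast; ring

lemma e2_differentiableOn : DifferentiableOn ℂ e2 UH :=
  differentiableOn_of_hasSum (fun _ h => e2_hasSum h)

lemma e2_add_one {τ : ℂ} (hτ : τ ∈ UH) : e2 (τ + 1) = e2 τ := by
  have h1 := e2_hasSum (τ := τ + 1) (by simpa [UH] using hτ)
  refine h1.unique ?_
  refine hasSum_of_eq (e2_hasSum hτ) fun m => ?_
  rw [← Complex.exp_periodic.nat_mul m (2 * Real.pi * I * (((m : ℤ) : ℂ) * τ))]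
  congr 2
  push_cast; ring

lemma e2_neg_inv {τ : ℂ} (hτ : τ ∈ UH) :
    e2 (-1 / τ) = τ ^ 2 * e2 τ - 6 * I / Real.pi * τ := by
  have e : UpperHalfPlane.ofComplex τ = ⟨τ, hτ⟩ := UpperHalfPlane.ofComplex_apply_of_im_pos hτ
  have e' : UpperHalfPlane.ofComplex (-1 / τ) = ModularGroup.S • (⟨τ, hτ⟩ : UpperHalfPlane) := by
    rw [UpperHalfPlane.ofComplex_apply_of_im_pos (uh_neg_inv hτ), UpperHalfPlane.modular_S_smul]
    ext
    simp [neg_div, inv_neg]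
  have h := EisensteinSeries.G2_S_transform ⟨τ, hτ⟩
  have h0 := uh_ne_zero hτ
  simp only [e2, e, e', EisensteinSeries.E2, Pi.smul_apply, smul_eq_mul, riemannZeta_two]
  rw [h]
  have hpi : (Real.pi : ℂ) ≠ 0 := by simp [Real.pi_ne_zero]
  field_simp
  ring

lemma e2_tendsto : Filter.Tendsto e2 imInfty (nhds 1) := by
  have := tendsto_of_hasSum (fun _ h => e2_hasSum h) {0} (by
    intro p hp _
    simp at hp; omega)
  simpa using this.add_const 1

/-- The coefficient of `q` in `E₂` is `-24`. -/
lemma e2_tendsto' : Filter.Tendsto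
    (fun τ => e2 τ * exp (-(2 * Real.pi * I * τ)) - exp (-(2 * Real.pi * I * τ)))
    imInfty (nhds (-24)) := by
  have h : ∀ τ ∈ UH, HasSum (fun m : ℕ =>
      (if m = 0 then 1 else -24 * ArithmeticFunction.sigma 1 m : ℂ) *
      exp (2 * Real.pi * I * (((m - 1 : ℤ) : ℂ) * τ))) (e2 τ * exp (-(2 * Real.pi * I * τ))) := by
    intro τ hτ
    refine hasSum_of_eq ((e2_hasSum hτ).mul_right (exp (-(2 * Real.pi * I * τ)))) fun m => ?_
    rw [mul_assoc _ (exp _), ← Complex.exp_add]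
    congr 2
    push_cast; ring
  have := tendsto_of_hasSum h {0, 1} (by
    intro p hp _
    simp at hp; omega)
  have := this.add_const (-24)
  rw [zero_add] at this
  refine this.congr (fun τ => ?_)
  simp
  ring

/-! ### Second derivatives in the elliptic variable -/

/-- Second-order chain rule for the theta-type transformation law
`H(w/τ) = exp(κ w²) G(w)`. -/
lemma second_deriv_transform {G H : ℂ → ℂ} (hG : Differentiable ℂ G) (hH : Differentiable ℂ H)
    {τ κ : ℂ} (h : ∀ w, H (w / τ) = exp (κ * w ^ 2) * G w) :
    deriv (deriv H) 0 / τ ^ 2 = 2 * κ * G 0 + deriv (deriv G) 0 := by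
  have hH' : Differentiable ℂ (deriv H) := hH.contDiff.differentiable_deriv_two
  have hG' : Differentiable ℂ (deriv G) := hG.contDiff.differentiable_deriv_two
  have d1 : ∀ w, HasDerivAt (fun w => H (w / τ)) (deriv H (w / τ) / τ) w := fun w => by
    have := (hH (w / τ)).hasDerivAt.comp w ((hasDerivAt_id w).div_const τ)
    exact this.congr_deriv (by simp [div_eq_mul_inv])
  have d2 : HasDerivAt (fun w => deriv H (w / τ) / τ) (deriv (deriv H) 0 / τ ^ 2) 0 := by
    have := ((hH' (0 / τ)).hasDerivAt.comp 0 ((hasDerivAt_id (0 : ℂ)).div_const τ)).div_const τ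
    refine this.congr_deriv (by rw [zero_div, pow_two]; field_simp)
  have x1 : ∀ w, HasDerivAt (fun w => exp (κ * w ^ 2)) (exp (κ * w ^ 2) * (κ * (2 * w))) w :=
    fun w => by
      have := ((hasDerivAt_pow 2 w).const_mul κ).cexp
      simpa using this
  have d3 : ∀ w, HasDerivAt (fun w => exp (κ * w ^ 2) * G w)
      (exp (κ * w ^ 2) * (κ * (2 * w)) * G w + exp (κ * w ^ 2) * deriv G w) w := fun w =>
    (x1 w).mul (hG w).hasDerivAt
  have d4 : HasDerivAt (fun w => exp (κ * w ^ 2) * (κ * (2 * w)) * G w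
      + exp (κ * w ^ 2) * deriv G w) (2 * κ * G 0 + deriv (deriv G) 0) 0 := by
    have := (((x1 0).mul (((hasDerivAt_id (0:ℂ)).const_mul 2).const_mul κ)).mul
      (hG 0).hasDerivAt).add ((x1 0).mul (hG' 0).hasDerivAt)
    refine this.congr_deriv ?_
    simp only [ne_eq, OfNat.ofNat_ne_zero, not_false_eq_true, zero_pow, mul_zero, Complex.exp_zero,
      zero_mul, mul_one, one_mul, id, Pi.mul_apply, zero_add]
    ring
  have e : (fun w => deriv H (w / τ) / τ) = fun w => exp (κ * w ^ 2) * (κ * (2 * w)) * G w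
      + exp (κ * w ^ 2) * deriv G w := by
    ext w
    refine (d1 w).unique ?_
    rw [funext h]
    exact d3 w
  rw [e] at d2
  exact d2.unique d4

/-- Termwise second derivative at `0` of an everywhere convergent exponential series with real
frequencies. -/
lemma hasSum_second_deriv {ι : Type*} {c : ι → ℂ} {r : ι → ℝ} {G : ℂ → ℂ}
    (h : ∀ w, HasSum (fun p => c p * exp (2 * Real.pi * I * (r p * w))) (G w)) :
    HasSum (fun p => (2 * Real.pi * I * r p) ^ 2 * c p) (deriv (deriv G) 0) := by
  -- since `x ≤ e^x`, one majorant serves the series and its first derivative on the unit disc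
  set u : ι → ℝ := fun p => ‖c p * exp (2 * Real.pi * I * (r p * (2 * I)))‖ +
    ‖c p * exp (2 * Real.pi * I * (r p * (-2 * I)))‖
  have hu : Summable u := (h _).summable.norm.add (h _).summable.norm
  have hub : ∀ p, ‖c p‖ * Real.exp (4 * Real.pi * |r p|) ≤ u p := by
    intro p
    simp only [u, norm_mul, Complex.norm_exp, ← mul_add]
    gcongr
    simp only [mul_re, mul_im, re_ofNat, im_ofNat, ofReal_re, ofReal_im, I_re, I_im, neg_re,
      neg_im]
    ring_nf
    rcases abs_cases (r p) with ⟨h1, -⟩ | ⟨h1, -⟩ <;> rw [h1]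
    · have := Real.exp_pos (-(Real.pi * r p * 4)); ring_nf at *; linarith
    · have := Real.exp_pos ((Real.pi * r p * 4)); ring_nf at *; linarith
  have hle : ∀ p (w : ℂ), w ∈ Metric.ball (0 : ℂ) 1 →
      ‖exp (2 * Real.pi * I * (r p * w))‖ ≤ Real.exp (2 * Real.pi * |r p|) := by
    intro p w hw
    rw [mem_ball_zero_iff] at hw
    rw [Complex.norm_exp, Real.exp_le_exp]
    refine (Complex.re_le_norm _).trans ?_
    simp only [norm_mul, Complex.norm_ofNat, norm_real, norm_I, Real.norm_eq_abs,
      abs_of_pos Real.pi_pos]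
    have : |r p| * ‖w‖ ≤ |r p| * 1 := by gcongr
    have := mul_le_mul_of_nonneg_left this Real.two_pi_pos.le
    linarith
  have hd : ∀ p (w : ℂ), HasDerivAt (fun w => c p * exp (2 * Real.pi * I * (r p * w)))
      (c p * (exp (2 * Real.pi * I * (r p * w)) * (2 * Real.pi * I * r p))) w := by
    intro p w
    have := ((((hasDerivAt_id w).const_mul (r p : ℂ)).const_mul (2 * Real.pi * I)).cexp).const_mul
      (c p)
    exact this.congr_deriv (by simp)
  have hd2 : ∀ p (w : ℂ), HasDerivAt
      (fun w => c p * (exp (2 * Real.pi * I * (r p * w)) * (2 * Real.pi * I * r p)))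
      (c p * (exp (2 * Real.pi * I * (r p * w)) * (2 * Real.pi * I * r p)) * (2 * Real.pi * I * r p))
      w := by
    intro p w
    have := (hd p w).mul_const (2 * Real.pi * I * r p)
    simpa only [mul_assoc] using this
  have s1 : ∀ w ∈ Metric.ball (0 : ℂ) 1, HasSum
      (fun p => c p * (exp (2 * Real.pi * I * (r p * w)) * (2 * Real.pi * I * r p)))
      (deriv G w) := by
    intro w hw
    have := Complex.hasSum_deriv_of_summable_norm hu
      (F := fun p w => c p * exp (2 * Real.pi * I * (r p * w)))
      (fun p => by fun_prop) Metric.isOpen_ball (fun p w hw => ?_) hw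
    · simp only [(hd _ _).deriv, (h _).tsum_eq] at this
      exact this
    · rw [norm_mul]
      refine le_trans ?_ (hub p)
      gcongr
      refine (hle p w hw).trans ?_
      rw [Real.exp_le_exp]
      nlinarith [mul_nonneg Real.pi_pos.le (abs_nonneg (r p))]
  have s2 := Complex.hasSum_deriv_of_summable_norm hu
      (F := fun p w => c p * (exp (2 * Real.pi * I * (r p * w)) * (2 * Real.pi * I * r p)))
      (fun p => by fun_prop) Metric.isOpen_ball (fun p w hw => by
        rw [norm_mul]
        refine le_trans ?_ (hub p)
        gcongr
        rw [norm_mul]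
        have e1 : ‖(2 * Real.pi * I * r p : ℂ)‖ = 2 * Real.pi * |r p| := by
          simp [abs_of_pos Real.pi_pos]
        have e2 := Real.add_one_le_exp (2 * Real.pi * |r p|)
        rw [e1, show 4 * Real.pi * |r p| = 2 * Real.pi * |r p| + 2 * Real.pi * |r p| by ring,
          Real.exp_add]
        have := Real.pi_pos
        gcongr
        · exact hle p w hw
        · linarith) (Metric.mem_ball_self (x := (0 : ℂ)) one_pos)
  have e : deriv (fun w => ∑' p, c p * (exp (2 * Real.pi * I * (r p * w)) *
      (2 * Real.pi * I * r p))) 0 = deriv (deriv G) 0 := by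
    refine Filter.EventuallyEq.deriv_eq ?_
    filter_upwards [Metric.ball_mem_nhds (0 : ℂ) one_pos] with w hw
    exact (s1 w hw).tsum_eq
  rw [e] at s2
  simp only [(hd2 _ _).deriv] at s2
  refine hasSum_of_eq s2 fun p => ?_
  simp
  ring

/-! ### The bilinear form -/

namespace EvenLattice

variable {n : ℕ} (L : EvenLattice n)

lemma bc_smul (l v : Fin n → ℚ) (w : ℂ) :
    L.bc (fun i => (l i : ℂ)) (fun i => w * (v i : ℂ)) = ((L.bq l v : ℚ) : ℂ) * w := by
  simp only [bc, bq, dotProduct, mulVec, Matrix.map_apply]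
  push_cast
  simp only [Finset.sum_mul, Finset.mul_sum]
  exact Finset.sum_congr rfl fun i _ => Finset.sum_congr rfl fun j _ => by ring

lemma bc_smul_smul (v : Fin n → ℚ) (w : ℂ) :
    L.bc (fun i => w * (v i : ℂ)) (fun i => w * (v i : ℂ)) = ((L.bq v v : ℚ) : ℂ) * w ^ 2 := by
  simp only [bc, bq, dotProduct, mulVec, Matrix.map_apply]
  push_cast
  simp only [Finset.sum_mul, Finset.mul_sum]
  exact Finset.sum_congr rfl fun i _ => Finset.sum_congr rfl fun j _ => by ring

lemma bq_add_right (x y z : Fin n → ℚ) : L.bq x (y + z) = L.bq x y + L.bq x z := by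
  simp [bq, mulVec_add]

lemma bq_add_left (x y z : Fin n → ℚ) : L.bq (x + y) z = L.bq x z + L.bq y z := by
  simp [bq]

lemma bq_comm (x y : Fin n → ℚ) : L.bq x y = L.bq y x := by
  have h : (L.G.map (Int.cast : ℤ → ℚ))ᵀ = L.G.map (Int.cast : ℤ → ℚ) := by
    rw [transpose_map.symm, L.symm.eq]
  rw [bq, bq, dotProduct_mulVec, ← mulVec_transpose, h, dotProduct_comm]

/-- Positivity on `L` passes to `L ⊗ ℚ` by clearing denominators. -/
lemma bq_pos {x : Fin n → ℚ} (hx : x ≠ 0) : 0 < L.bq x x := by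
  set D : ℕ := ∏ i, (x i).den
  have hD : (0 : ℚ) < D := by
    exact_mod_cast Finset.prod_pos fun i _ => (x i).den_pos
  have hy : ∀ i, ∃ m : ℤ, (D : ℚ) * x i = m := by
    intro i
    obtain ⟨k, hk⟩ := Finset.dvd_prod_of_mem (fun i => (x i).den) (Finset.mem_univ i)
    refine ⟨(x i).num * k, ?_⟩
    have : D = (x i).den * k := hk
    rw [this]
    push_cast
    have := Rat.mul_den_eq_num (x i)
    linear_combination (k : ℚ) * this
  choose y hy using hy
  have hy0 : y ≠ 0 := by
    rintro rfl
    refine hx (funext fun i => ?_)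
    have := hy i
    simpa [hD.ne'] using this
  have h1 := L.posdef y hy0
  have h2 : ((y ⬝ᵥ (L.G *ᵥ y) : ℤ) : ℚ) = D ^ 2 * L.bq x x := by
    simp only [bq, dotProduct, mulVec, Matrix.map_apply]
    push_cast
    simp only [← hy, Finset.mul_sum]
    exact Finset.sum_congr rfl fun i _ => Finset.sum_congr rfl fun j _ => by ring
  have h3 : (0 : ℚ) < D ^ 2 * L.bq x x := by rw [← h2]; exact_mod_cast h1
  exact pos_of_mul_pos_right h3 (by positivity)

lemma bq_nonneg (x : Fin n → ℚ) : 0 ≤ L.bq x x := by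
  by_cases hx : x = 0
  · simp [hx, bq]
  · exact (L.bq_pos hx).le

/-- The rational Gram matrix is nonsingular. -/
lemma det_ne_zero : (L.G.map (Int.cast : ℤ → ℚ)).det ≠ 0 := by
  intro h
  obtain ⟨v, hv, hv'⟩ := Matrix.exists_mulVec_eq_zero_iff.mpr h
  have := L.bq_pos hv
  rw [bq, hv', dotProduct_zero] at this
  exact this.false

/-- Dual bases: vectors `e i`, `e' i` with `Σ (x, e i)(x, e' i) = (x, x)` and
`Σ (e i, e' i) = n`. -/
lemma exists_dual_bases : ∃ e e' : Fin n → Fin n → ℚ,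
    (∀ x, ∑ i, L.bq x (e i) * L.bq x (e' i) = L.bq x x) ∧ ∑ i, L.bq (e i) (e' i) = n := by
  set A := L.G.map (Int.cast : ℤ → ℚ) with hA
  have hu : IsUnit A.det := isUnit_iff_ne_zero.mpr L.det_ne_zero
  have h' : ∀ x i, L.bq x (A⁻¹ *ᵥ Pi.single i 1) = x i := by
    intro x i
    rw [bq, mulVec_mulVec, ← hA, mul_nonsing_inv _ hu, one_mulVec, dotProduct_single_one]
  refine ⟨fun i => Pi.single i 1, fun i => A⁻¹ *ᵥ Pi.single i 1, fun x => ?_, ?_⟩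
  · simp only [h']
    rw [L.bq_comm x x]
    conv_rhs => rw [bq, dotProduct]
    refine Finset.sum_congr rfl fun i _ => ?_
    rw [L.bq_comm x, bq, single_one_dotProduct, mul_comm]
  · simp only [h', Pi.single_eq_same]; simp

end EvenLattice

/-! ### Moment identities for the Fourier coefficients -/

section

variable {n : ℕ} {L : EvenLattice n}

/-- Exponents in the support of `f(m,l)` with `m ≤ 0`: positivity of the form leaves the origin
for `m = -1` and the origin, the roots and the vectors of norm `1/2` for `m = 0`. -/
lemma TwoReflective.support {φ : WeakJacobiForm L 0} {β₀ : ℤ} (h : TwoReflective φ β₀)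
    {m : ℤ} {l : Fin n → ℚ} (hc : φ.coef m l ≠ 0) :
    1 ≤ m ∨ (m = 0 ∧ (l = 0 ∨ (L.IsIntVec l ∧ L.bq l l = 2) ∨
      (L.bq l l = 1 / 2 ∧ L.IsIntVec (fun i => 2 * l i)))) ∨ (m = -1 ∧ l = 0) := by
  have hl := L.bq_nonneg l
  rcases le_or_gt 1 m with hm | hm
  · exact Or.inl hm
  right
  have hm1 : m ≤ 0 := by omega
  have hmq : (m : ℚ) ≤ 0 := by exact_mod_cast hm1
  by_cases hl0 : l = 0
  · subst hl0
    have hb : L.bq 0 0 = 0 := by simp [EvenLattice.bq]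
    rcases hm1.eq_or_lt with h0 | h0
    · exact Or.inl ⟨h0, Or.inl rfl⟩
    right
    refine ⟨?_, rfl⟩
    by_contra hne
    have h2 : m ≤ -2 := by omega
    have h2q : (m : ℚ) ≤ -2 := by exact_mod_cast h2
    refine hc (h.2.2 m 0 ?_ ?_ ?_)
    · rw [hb]; linarith
    · rintro ⟨h3, -⟩; rw [hb] at h3; linarith
    · rintro ⟨h3, -⟩; rw [hb] at h3; linarith
  have hp := L.bq_pos hl0
  by_contra hcon
  push Not at hcon
  refine hc (h.2.2 m l ?_ ?_ ?_)
  · linarith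
  · rintro ⟨h3, hi⟩
    rcases hm1.eq_or_lt with h0 | h0
    · subst h0
      exact (hcon.1 rfl).2.1 hi (by push_cast at h3; linarith)
    · have : (m : ℚ) ≤ -1 := by exact_mod_cast Int.le_sub_one_of_lt h0
      linarith
  · rintro ⟨h3, hi⟩
    rcases hm1.eq_or_lt with h0 | h0
    · subst h0
      exact (hcon.1 rfl).2.2 (by push_cast at h3; linarith) hi
    · have : (m : ℚ) ≤ -1 := by exact_mod_cast Int.le_sub_one_of_lt h0
      linarith

lemma TwoReflective.coef_neg_one {φ : WeakJacobiForm L 0} {β₀ : ℤ} (h : TwoReflective φ β₀) :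
    φ.coef (-1) 0 = β₀ :=
  h.1 (-1) 0 (by simp [EvenLattice.bq]) (fun i => ⟨0, by simp⟩)

/-- The second-moment identity for the `q⁰`-term: the weight 2 form
`12 B_v - (v,v) E₂ A`, where `A = φ(τ,0)` and `B_v = Σ f(m,l) (l,v)² q^m`, has vanishing
constant term. -/
lemma second_moment {φ : WeakJacobiForm L 0} {β₀ : ℤ} (h : TwoReflective φ β₀)
    (v : Fin n → ℚ) :
    12 * ∑ l ∈ (φ.coef_finite 0).toFinset, φ.coef 0 l * ((L.bq l v : ℚ) : ℂ) ^ 2 =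
      ((L.bq v v : ℚ) : ℂ) * (∑ l ∈ (φ.coef_finite 0).toFinset, φ.coef 0 l - 24 * β₀) := by
  classical
  set S₀ := (φ.coef_finite 0).toFinset
  set N : ℂ := ((L.bq v v : ℚ) : ℂ)
  set G : ℂ → ℂ → ℂ := fun τ w => φ.toFun τ (fun i => w * (v i : ℂ))
  set A : ℂ → ℂ := fun τ => G τ 0
  set B : ℂ → ℂ := fun τ => deriv (deriv (G τ)) 0 / (2 * Real.pi * I) ^ 2
  have hpi : (Real.pi : ℂ) ≠ 0 := by simp [Real.pi_ne_zero]
  have h2pi : (2 * Real.pi * I : ℂ) ≠ 0 := by simp [Real.pi_ne_zero]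
  have hG : ∀ τ ∈ UH, Differentiable ℂ (G τ) := by
    intro τ hτ
    rw [← differentiableOn_univ]
    refine φ.holo.comp (f := fun w : ℂ => (τ, fun i => w * (v i : ℂ))) ?_ ?_
    · fun_prop
    · intro w _
      exact ⟨hτ, Set.mem_univ _⟩
  have hGs : ∀ τ ∈ UH, ∀ w, HasSum (fun p : ℤ × (Fin n → ℚ) =>
      (φ.coef p.1 p.2 * exp (2 * Real.pi * I * (p.1 * τ))) *
        exp (2 * Real.pi * I * (((L.bq p.2 v : ℚ) : ℝ) * w))) (G τ w) := by
    intro τ hτ w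
    refine hasSum_of_eq (φ.expansion τ hτ _) fun p => ?_
    rw [L.bc_smul, mul_add, Complex.exp_add]
    push_cast
    ring
  have hA : ∀ τ ∈ UH, HasSum (fun p : ℤ × (Fin n → ℚ) =>
      φ.coef p.1 p.2 * exp (2 * Real.pi * I * (p.1 * τ))) (A τ) := by
    intro τ hτ
    refine hasSum_of_eq (hGs τ hτ 0) fun p => ?_
    simp
  have hB : ∀ τ ∈ UH, HasSum (fun p : ℤ × (Fin n → ℚ) =>
      (φ.coef p.1 p.2 * ((L.bq p.2 v : ℚ) : ℂ) ^ 2) * exp (2 * Real.pi * I * (p.1 * τ)))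
      (B τ) := by
    intro τ hτ
    refine hasSum_of_eq ((hasSum_second_deriv (hGs τ hτ)).div_const _) fun p => ?_
    field_simp
    push_cast
    ring
  have hAT : ∀ τ ∈ UH, A (τ + 1) = A τ ∧ B (τ + 1) = B τ := by
    intro τ hτ
    have := φ.modular 1 1 0 1 (by norm_num) τ hτ
    have hg : G (τ + 1) = G τ := by
      ext w
      simpa [G] using this (fun i => w * (v i : ℂ))
    simp only [A, B, hg, and_self]
  have hSw : ∀ τ ∈ UH, ∀ w, G (-1 / τ) (w / τ) = exp ((Real.pi * I * N / τ) * w ^ 2) * G τ w := by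
    intro τ hτ w
    have := φ.modular 0 (-1) 1 0 (by norm_num) τ hτ (fun i => w * (v i : ℂ))
    rw [L.bc_smul_smul] at this
    simp only [Int.cast_zero, zero_mul, zero_add, Int.cast_neg, Int.cast_one, one_mul, add_zero,
      zpow_zero, mul_one] at this
    simp only [G]
    convert this using 4
    · ring
    · ring
  have hAS : ∀ τ ∈ UH, A (-1 / τ) = A τ := by
    intro τ hτ
    simpa [A] using hSw τ hτ 0
  have hBS : ∀ τ ∈ UH, B (-1 / τ) = τ ^ 2 * B τ + N * τ / (2 * Real.pi * I) * A τ := by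
    intro τ hτ
    have h0 := uh_ne_zero hτ
    have := second_deriv_transform (hG τ hτ) (hG _ (uh_neg_inv hτ)) (hSw τ hτ)
    rw [div_eq_iff (pow_ne_zero 2 h0)] at this
    simp only [B, this, A]
    have hI := I_ne_zero
    field_simp
    ring
  -- the finitely many terms with nonpositive exponent
  set s : Finset (ℤ × (Fin n → ℚ)) := insert (-1, 0) (S₀.image fun l => ((0 : ℤ), l))
  have hs : ∀ p ∉ s, φ.coef p.1 p.2 ≠ 0 → 1 ≤ p.1 := by
    rintro ⟨m, l⟩ hp hc
    simp only at hc
    rcases h.support hc with h1 | ⟨h1, -⟩ | ⟨h1, h2⟩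
    · exact h1
    · subst h1
      exact absurd (by simp [s, S₀, hc]) hp
    · subst h1 h2
      exact absurd (by simp [s]) hp
  have hsum : ∀ f : ℤ × (Fin n → ℚ) → ℂ, ∑ p ∈ s, f p = f (-1, 0) + ∑ l ∈ S₀, f (0, l) := by
    intro f
    rw [Finset.sum_insert (by simp), Finset.sum_image (by simp)]
  have tA := tendsto_of_hasSum hA s hs
  have tB := tendsto_of_hasSum hB s (fun p hp hc => hs p hp (left_ne_zero_of_mul hc))
  simp only [hsum, h.coef_neg_one, Int.cast_zero, zero_mul, mul_zero, Complex.exp_zero,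
    mul_one] at tA tB
  set a := ∑ l ∈ S₀, φ.coef 0 l
  set b := ∑ l ∈ S₀, φ.coef 0 l * ((L.bq l v : ℚ) : ℂ) ^ 2
  have hb0 : L.bq 0 v = 0 := by simp [EvenLattice.bq]
  have tA' : Filter.Tendsto (fun τ => A τ - β₀ * exp (-(2 * Real.pi * I * τ))) imInfty
      (nhds a) := by
    have := tA.add_const a
    rw [zero_add] at this
    refine this.congr fun τ => ?_
    rw [show (2 * Real.pi * I * (((-1 : ℤ) : ℂ) * τ)) = -(2 * Real.pi * I * τ) by push_cast; ring]
    ring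
  have tB' : Filter.Tendsto B imInfty (nhds b) := by
    have := tB.add_const b
    rw [zero_add] at this
    refine this.congr fun τ => ?_
    simp [hb0]
  have hzero := const_term_eq_zero (F := fun τ => 12 * B τ - N * (e2 τ * A τ))
    (C := -(N * β₀)) (c := 12 * b - N * (1 * a + β₀ * (-24)))
    (((differentiableOn_of_hasSum hB).const_mul 12).sub
      ((e2_differentiableOn.mul (differentiableOn_of_hasSum hA)).const_mul N))
    (fun τ hτ => by rw [(hAT τ hτ).1, (hAT τ hτ).2, e2_add_one hτ])
    (fun τ hτ => by
      rw [hAS τ hτ, hBS τ hτ, e2_neg_inv hτ]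
      have hI := I_ne_zero
      field_simp
      linear_combination (12 * N * τ * A τ) * I_sq)
    (((tB'.const_mul 12).sub (((e2_tendsto.mul tA').add
      (e2_tendsto'.const_mul (β₀ : ℂ))).const_mul N)).congr fun τ => by ring)
  linear_combination hzero

end

/-- The second moments of `f(0,·)` traced against a pair of dual bases. -/
lemma trace_identity {n : ℕ} {L : EvenLattice n} {φ : WeakJacobiForm L 0} {β₀ : ℤ}
    (h : TwoReflective φ β₀) :
    12 * ∑ l ∈ (φ.coef_finite 0).toFinset, φ.coef 0 l * ((L.bq l l : ℚ) : ℂ) =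
      n * (∑ l ∈ (φ.coef_finite 0).toFinset, φ.coef 0 l - 24 * β₀) := by
  set S₀ := (φ.coef_finite 0).toFinset
  set K := ∑ l ∈ S₀, φ.coef 0 l - 24 * β₀
  have hpol : ∀ v w, 12 * ∑ l ∈ S₀, φ.coef 0 l *
      (((L.bq l v : ℚ) : ℂ) * ((L.bq l w : ℚ) : ℂ)) = ((L.bq v w : ℚ) : ℂ) * K := by
    intro v w
    have h1 := second_moment h (v + w)
    have h2 := second_moment h v
    have h3 := second_moment h w
    simp only [L.bq_add_right, L.bq_add_left, L.bq_comm w v] at h1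
    have e : ∑ l ∈ S₀, φ.coef 0 l * ((L.bq l v + L.bq l w : ℚ) : ℂ) ^ 2 =
        ∑ l ∈ S₀, φ.coef 0 l * ((L.bq l v : ℚ) : ℂ) ^ 2 +
        ∑ l ∈ S₀, φ.coef 0 l * ((L.bq l w : ℚ) : ℂ) ^ 2 +
        2 * ∑ l ∈ S₀, φ.coef 0 l * (((L.bq l v : ℚ) : ℂ) * ((L.bq l w : ℚ) : ℂ)) := by
      rw [Finset.mul_sum, ← Finset.sum_add_distrib, ← Finset.sum_add_distrib]
      refine Finset.sum_congr rfl fun l _ => ?_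
      push_cast; ring
    rw [e] at h1
    push_cast at h1
    linear_combination (h1 - h2 - h3) / 2
  obtain ⟨e, e', he, he'⟩ := L.exists_dual_bases
  have h1 : ∑ i, 12 * ∑ l ∈ S₀, φ.coef 0 l *
      (((L.bq l (e i) : ℚ) : ℂ) * ((L.bq l (e' i) : ℚ) : ℂ)) =
      ∑ i, ((L.bq (e i) (e' i) : ℚ) : ℂ) * K :=
    Finset.sum_congr rfl fun i _ => hpol _ _
  rw [← Finset.sum_mul, ← Finset.mul_sum, Finset.sum_comm, ← Rat.cast_sum, he'] at h1
  push_cast at h1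
  rw [← h1]
  congr 1
  refine Finset.sum_congr rfl fun l _ => ?_
  rw [← Finset.mul_sum, ← he l]
  push_cast
  rfl

/-! ### The weight formula -/

/-- the weight formula for 2-reflective modular forms, in its Jacobi-form
formulation: `f(0,0) = 2k` where
`k = β₀·[12 + |R(L)|·(12/n₀ − 1/2)] + (3/n₀ − 1/2)·Σ_{s ∈ L^∨, (s,s)=1/2, 2s∈L} f(0,s)`. -/
theorem two_reflective_weight_formula {n₀ : ℕ} (hn : 1 ≤ n₀) (L : EvenLattice n₀)
    (β₀ : ℤ) (φ : WeakJacobiForm L 0) (h : TwoReflective φ β₀) :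
    φ.coef 0 0 =
      2 * ((β₀ : ℂ) * (12 + (L.rootCount : ℂ) * (12 / (n₀ : ℂ) - 1 / 2)) +
        (3 / (n₀ : ℂ) - 1 / 2) *
          ∑ᶠ s ∈ {s : Fin n₀ → ℚ | L.InDual s ∧ L.bq s s = 1 / 2 ∧
            L.IsIntVec (fun i => 2 * s i)}, φ.coef 0 s) := by
  classical
  have key := trace_identity h
  set S₀ := (φ.coef_finite 0).toFinset with hS₀
  have hmem : ∀ l, l ∈ S₀ ↔ φ.coef 0 l ≠ 0 := by simp [hS₀]
  have hb0 : L.bq 0 0 = 0 := by simp [EvenLattice.bq]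
  set R : (Fin n₀ → ℚ) → Prop := fun l => L.IsIntVec l ∧ L.bq l l = 2
  set T : (Fin n₀ → ℚ) → Prop := fun s => L.InDual s ∧ L.bq s s = 1 / 2 ∧
            L.IsIntVec (fun i => 2 * s i)
  -- the three kinds of vectors contributing to the `q⁰`-term
  have hsplit : ∀ g : ℚ → ℂ, ∑ l ∈ S₀, φ.coef 0 l * g (L.bq l l) =
      φ.coef 0 0 * g 0 + (∑ l ∈ S₀ with R l, φ.coef 0 l) * g 2 +
        (∑ l ∈ S₀ with T l, φ.coef 0 l) * g (1 / 2) := by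
    intro g
    have h0 : φ.coef 0 0 * g 0 = ∑ l ∈ S₀, if l = 0 then φ.coef 0 0 * g 0 else 0 := by
      rw [Finset.sum_ite_eq']
      split_ifs with h1
      · rfl
      · rw [hmem, not_not] at h1
        rw [h1, zero_mul]
    rw [h0, Finset.sum_mul, Finset.sum_mul, Finset.sum_filter, Finset.sum_filter,
      ← Finset.sum_add_distrib, ← Finset.sum_add_distrib]
    refine Finset.sum_congr rfl fun l hl => ?_
    have hc := (hmem l).mp hl
    have hd := φ.coef_dual 0 l hc
    rcases h.support hc with h1 | ⟨-, h1 | ⟨h1, h2⟩ | ⟨h1, h2⟩⟩ | ⟨h1, -⟩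
    · omega
    · subst h1
      have hR : ¬ R 0 := fun h2 => by have := h2.2; rw [hb0] at this; norm_num at this
      have hT : ¬ T 0 := fun h2 => by have := h2.2.1; rw [hb0] at this; norm_num at this
      simp [hR, hT, hb0]
    · have hR : R l := ⟨h1, h2⟩
      have hT : ¬ T l := fun h3 => by have := h3.2.1; rw [h2] at this; norm_num at this
      have hz : l ≠ 0 := by rintro rfl; rw [hb0] at h2; norm_num at h2
      simp [hR, hT, h2, hz]
    · have hT : T l := ⟨hd, h1, h2⟩
      have hR : ¬ R l := fun h3 => by have := h3.2; rw [h1] at this; norm_num at this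
      have hz : l ≠ 0 := by rintro rfl; rw [hb0] at h1; norm_num at h1
      simp only [hR, hT, h1, hz, if_true, if_false, zero_add]
    · omega
  have hR : ∑ l ∈ S₀ with R l, φ.coef 0 l = β₀ * L.rootCount := by
    have hβ : ∀ l, R l → φ.coef 0 l = β₀ := fun l hl =>
      h.1 0 l (by rw [hl.2]; norm_num) hl.1
    rw [Finset.sum_congr rfl (fun l hl => hβ l (Finset.mem_filter.mp hl).2), Finset.sum_const,
      nsmul_eq_mul]
    -- when `β₀ = 0` the roots are invisible to `S₀`, but both sides vanish
    by_cases hz : (β₀ : ℂ) = 0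
    · simp [hz]
    have : L.rootCount = (S₀.filter R).card := by
      refine Nat.subtype_card _ fun l => ?_
      rw [Finset.mem_filter, hmem, and_iff_right_iff_imp]
      intro hl
      rw [hβ l hl]
      exact hz
    rw [this, mul_comm]
  have hT : ∑ᶠ s ∈ {s : Fin n₀ → ℚ | T s}, φ.coef 0 s = ∑ l ∈ S₀ with T l, φ.coef 0 l := by
    refine finsum_mem_eq_sum_of_inter_support_eq _ ?_
    ext l
    simp only [Set.mem_inter_iff, Function.mem_support, Finset.coe_filter, hmem, Set.mem_ofPred_eq]
    tauto
  have k1 := hsplit fun _ => 1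
  have k2 := hsplit fun x => (x : ℂ)
  simp only [mul_one] at k1
  rw [k1, k2, hR] at key
  rw [hT]
  have hn' : (n₀ : ℂ) ≠ 0 := by
    have : n₀ ≠ 0 := by omega
    exact_mod_cast this
  push_cast at key
  field_simp
  linear_combination -key
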